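/- arXiv:2605.01007 — 2 statements merged into one kernel-verified Lean document; each statement's English description precedes it below -/
import Mathlib

section
/- For every n ≥ 1, the number of labeled planar binary trees with n leaves that avoid the three patterns x(*, x(*,*)), x(*, y(*,*)), y(*, y(*,*)) equals the n-th Catalan number (2n)!/(n!·(n+1)!) = binom(2n, n)/(n+1). (This number is the dimension of the n-th component of the operad noncom-Zin.) -/
/-- Planar binary trees with internal vertices labeled by one of two symbols `x`, `y`. -/
inductive LTree : Type
  | leaf : LTree
  | x : LTree → LTree → LTree
  | y : LTree → LTree → LTree

namespace LTree

/-- Number of leaves. -/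
def leaves : LTree → ℕ
  | leaf => 1
  | x u v => u.leaves + v.leaves
  | y u v => u.leaves + v.leaves

/-- The subtree relation. -/
inductive Subtree : LTree → LTree → Prop
  | refl (t : LTree) : Subtree t t
  | xl {s u v : LTree} : Subtree s u → Subtree s (x u v)
  | xr {s u v : LTree} : Subtree s v → Subtree s (x u v)
  | yl {s u v : LTree} : Subtree s u → Subtree s (y u v)
  | yr {s u v : LTree} : Subtree s v → Subtree s (y u v)

/-- A tree matches (at the root) one of the three forbidden patterns
`x(*, x(*,*))`, `x(*, y(*,*))`, `y(*, y(*,*))`. -/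
def IsBadZin : LTree → Prop
  | x _ (x _ _) => True
  | x _ (y _ _) => True
  | y _ (y _ _) => True
  | _ => False

/-- A tree avoids the three patterns iff no subtree matches one of them. -/
def AvoidsZin (t : LTree) : Prop := ∀ s : LTree, Subtree s t → ¬ IsBadZin s

end LTree

/-!
A tree avoiding the three patterns is `leaf`, `x a leaf`, `y a leaf` or `y a (x b leaf)` with `a`
and `b` avoiding them as well, so the generating function of these trees by leaves satisfies
`f = z + 2 z f + z f² = z (1 + f)²`. This is the equation of nonempty binary trees counted by nodes,
whose left and right subtrees are each either empty or nonempty. Matching the four shapes yields a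
bijection that turns leaves into nodes.
-/

namespace LTree

open BinaryTree (nil treesOfNumNodesEq)
open scoped BinaryTree

theorem avoidsZin_leaf : AvoidsZin leaf := by
  rintro _ ⟨⟩
  exact id

theorem avoidsZin_x_iff {u v : LTree} :
    AvoidsZin (x u v) ↔ ¬ IsBadZin (x u v) ∧ AvoidsZin u ∧ AvoidsZin v := by
  refine ⟨fun h ↦ ⟨h _ (.refl _), fun s hs ↦ h s (.xl hs), fun s hs ↦ h s (.xr hs)⟩, ?_⟩
  rintro ⟨hroot, hu, hv⟩ s hs
  cases hs with
  | refl => exact hroot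
  | xl hs => exact hu s hs
  | xr hs => exact hv s hs

theorem avoidsZin_y_iff {u v : LTree} :
    AvoidsZin (y u v) ↔ ¬ IsBadZin (y u v) ∧ AvoidsZin u ∧ AvoidsZin v := by
  refine ⟨fun h ↦ ⟨h _ (.refl _), fun s hs ↦ h s (.yl hs), fun s hs ↦ h s (.yr hs)⟩, ?_⟩
  rintro ⟨hroot, hu, hv⟩ s hs
  cases hs with
  | refl => exact hroot
  | yl hs => exact hu s hs
  | yr hs => exact hv s hs

/-- The normal monomials of `noncom-Zin`, generated by the four shapes they can have; this is the
form of `AvoidsZin` on which the encoding `toBinaryTree` is analysed. -/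
inductive IsZinNormal : LTree → Prop
  | leaf : IsZinNormal leaf
  | x_leaf {a : LTree} : IsZinNormal a → IsZinNormal (x a leaf)
  | y_leaf {a : LTree} : IsZinNormal a → IsZinNormal (y a leaf)
  | y_x_leaf {a b : LTree} : IsZinNormal a → IsZinNormal b → IsZinNormal (y a (x b leaf))

theorem IsZinNormal.avoidsZin {t : LTree} (ht : IsZinNormal t) : AvoidsZin t := by
  induction ht <;> simp_all [avoidsZin_leaf, avoidsZin_x_iff, avoidsZin_y_iff, IsBadZin]

theorem AvoidsZin.isZinNormal {t : LTree} (ht : AvoidsZin t) : IsZinNormal t := by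
  induction t with
  | leaf => exact .leaf
  | x u v ihu ihv =>
    obtain ⟨hroot, hu, hv⟩ := avoidsZin_x_iff.mp ht
    cases ihv hv with
    | leaf => exact .x_leaf (ihu hu)
    | x_leaf | y_leaf | y_x_leaf => exact (hroot trivial).elim
  | y u v ihu ihv =>
    obtain ⟨hroot, hu, hv⟩ := avoidsZin_y_iff.mp ht
    cases ihv hv with
    | leaf => exact .y_leaf (ihu hu)
    | x_leaf hb => exact .y_x_leaf (ihu hu) hb
    | y_leaf | y_x_leaf => exact (hroot trivial).elim

theorem avoidsZin_iff_isZinNormal {t : LTree} : AvoidsZin t ↔ IsZinNormal t :=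
  ⟨AvoidsZin.isZinNormal, IsZinNormal.avoidsZin⟩

/-- The encoding of normal monomials as nonempty binary trees: `leaf`, `x a leaf`, `y a leaf` and
`y a (x b leaf)` go to the nodes with pairs of subtrees `(∅, ∅)`, `(∅, a)`, `(a, ∅)` and `(a, b)`.
Taking `right` treats the last two shapes uniformly, as `leaf` and `x b leaf` are themselves encoded
with right subtrees `∅` and `b`. The values at trees that are not normal are irrelevant. -/
def toBinaryTree : LTree → BinaryTree Unit
  | leaf => nil △ nil
  | x u _ => nil △ u.toBinaryTree
  | y u v => u.toBinaryTree △ v.toBinaryTree.right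

theorem toBinaryTree_ne_nil (t : LTree) : t.toBinaryTree ≠ nil := by
  cases t <;> simp [toBinaryTree]

theorem IsZinNormal.numNodes_toBinaryTree {t : LTree} (ht : IsZinNormal t) :
    t.toBinaryTree.numNodes = t.leaves := by
  induction ht <;> grind [toBinaryTree, leaves, BinaryTree.numNodes, BinaryTree.right]

theorem IsZinNormal.eq_of_toBinaryTree_eq {s t : LTree} (hs : IsZinNormal s)
    (ht : IsZinNormal t) (hst : s.toBinaryTree = t.toBinaryTree) : s = t := by
  -- As encodings are never `nil`, the shape is determined by which of the two subtrees are `nil`.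
  induction hs generalizing t <;> cases ht <;>
    grind [toBinaryTree, toBinaryTree_ne_nil, BinaryTree.right]

theorem exists_isZinNormal_toBinaryTree_eq {b : BinaryTree Unit} (hb : b ≠ nil) :
    ∃ t, IsZinNormal t ∧ t.toBinaryTree = b := by
  induction b using BinaryTree.unitRecOn with
  | base => exact (hb rfl).elim
  | ind l r ihl ihr =>
    rcases eq_or_ne l nil with rfl | hl <;> rcases eq_or_ne r nil with rfl | hr
    · exact ⟨leaf, .leaf, rfl⟩
    · obtain ⟨a, ha, rfl⟩ := ihr hr
      exact ⟨x a leaf, .x_leaf ha, rfl⟩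
    · obtain ⟨a, ha, rfl⟩ := ihl hl
      exact ⟨y a leaf, .y_leaf ha, rfl⟩
    · obtain ⟨a, ha, rfl⟩ := ihl hl
      obtain ⟨c, hc, rfl⟩ := ihr hr
      exact ⟨y a (x c leaf), .y_x_leaf ha hc, rfl⟩

theorem bijOn_toBinaryTree : Set.BijOn toBinaryTree {t | IsZinNormal t} {nil}ᶜ :=
  ⟨fun t _ ↦ toBinaryTree_ne_nil t, fun _ hs _ ht ↦ hs.eq_of_toBinaryTree_eq ht,
    fun _ ↦ exists_isZinNormal_toBinaryTree_eq⟩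

theorem bijOn_toBinaryTree_treesOfNumNodesEq {n : ℕ} (hn : n ≠ 0) :
    Set.BijOn toBinaryTree {t | t.leaves = n ∧ AvoidsZin t} (treesOfNumNodesEq n) := by
  have subset_compl_nil : (treesOfNumNodesEq n : Set (BinaryTree Unit)) ⊆ {nil}ᶜ := by
    rintro _ hb rfl
    exact hn (BinaryTree.mem_treesOfNumNodesEq.mp hb).symm
  convert bijOn_toBinaryTree.subset_right subset_compl_nil using 1
  ext t
  simp only [avoidsZin_iff_isZinNormal, Set.mem_ofPred_eq, Set.mem_inter_iff, Set.mem_preimage,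
    Finset.mem_coe, BinaryTree.mem_treesOfNumNodesEq]
  rw [and_comm]
  exact and_congr_right fun ht ↦ by rw [ht.numNodes_toBinaryTree]

theorem card_leaves_eq_and_avoidsZin {n : ℕ} (hn : n ≠ 0) :
    Nat.card {t : LTree // t.leaves = n ∧ AvoidsZin t} = catalan n :=
  calc
    Nat.card {t : LTree // t.leaves = n ∧ AvoidsZin t}
      = (treesOfNumNodesEq n : Set (BinaryTree Unit)).ncard :=
        (bijOn_toBinaryTree_treesOfNumNodesEq hn).ncard_eq
    _ = catalan n := by
        rw [Set.ncard_coe_finset, BinaryTree.treesOfNumNodesEq_card_eq_catalan]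

end LTree

open LTree in
/-- For every `n ≥ 1`, the number of labeled planar binary trees with `n` leaves
avoiding the three patterns `x(*, x(*,*))`, `x(*, y(*,*))`, `y(*, y(*,*))`
(i.e. `dim (noncom-Zin)(n)`) equals the `n`-th Catalan number
`(2n)! / (n! (n+1)!) = C(2n, n) / (n+1)`. -/
theorem noncomZin_dim_eq_catalan :
    ∀ n : ℕ, 1 ≤ n →
      Nat.card {t : LTree // t.leaves = n ∧ AvoidsZin t} = catalan n ∧
      Nat.card {t : LTree // t.leaves = n ∧ AvoidsZin t} = (2 * n).choose n / (n + 1) := by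
  intro n hn
  have card_eq := card_leaves_eq_and_avoidsZin (Nat.one_le_iff_ne_zero.mp hn)
  refine ⟨card_eq, ?_⟩
  rw [card_eq, catalan_eq_centralBinom_div, Nat.centralBinom_eq_two_mul_choose]
end

section
/- For every n ≥ 1, the number of labeled planar binary trees with n leaves avoiding the two patterns y(*, y(*,*)) and y(*, x(*, x(*,*))) equals (3n − 2)!/(n!·(2n − 1)!) = (1/n)·binom(3n − 2, n − 1). (This number is the dimension of the n-th component of the operad noncom-Flex.) -/
namespace LTree

/-- A tree matches (at the root) one of the two forbidden patterns
`y(*, y(*,*))` and `y(*, x(*, x(*,*)))`. -/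
def IsBadFlex : LTree → Prop
  | y _ (y _ _) => True
  | y _ (x _ (x _ _)) => True
  | _ => False

/-- A tree avoids the two patterns iff no subtree matches one of them. -/
def AvoidsFlex (t : LTree) : Prop := ∀ s : LTree, Subtree s t → ¬ IsBadFlex s

end LTree

section CountingSeries

open PowerSeries Function
open Finset.HasAntidiagonal (antidiagonal mem_antidiagonal)

variable {α β γ : Type*} (R : Type*) [Semiring R]

/-- The ordinary generating function of a set `s` of objects graded by `size`. It is meant for
gradings with finite fibers: an infinite fiber of `s` would contribute the coefficient `0`. -/
noncomputable def countingSeries (size : α → ℕ) (s : Set α) : R⟦X⟧ :=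
  .mk fun n => ((s ∩ size ⁻¹' {n}).ncard : R)

lemma coeff_countingSeries (size : α → ℕ) (s : Set α) (n : ℕ) :
    coeff n (countingSeries R size s) = (s ∩ size ⁻¹' {n}).ncard :=
  coeff_mk _ _

lemma constantCoeff_countingSeries {size : α → ℕ} (hpos : ∀ a, 0 < size a) (s : Set α) :
    constantCoeff (countingSeries R size s) = 0 := by
  have hempty : s ∩ size ⁻¹' {0} = ∅ :=
    Set.eq_empty_of_forall_notMem fun a ha => (hpos a).ne' ha.2
  rw [← coeff_zero_eq_constantCoeff_apply, coeff_countingSeries, hempty, Set.ncard_empty,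
    Nat.cast_zero]

lemma countingSeries_singleton (size : α → ℕ) (a : α) :
    countingSeries R size {a} = X ^ size a := by
  ext n
  rw [coeff_countingSeries, coeff_X_pow]
  split_ifs with h
  · rw [Set.inter_eq_left.2 (by simp [h]), Set.ncard_singleton, Nat.cast_one]
  · rw [Set.singleton_inter_eq_empty.2 (by simpa using Ne.symm h), Set.ncard_empty, Nat.cast_zero]

lemma countingSeries_union {size : α → ℕ} (hfin : ∀ n, (size ⁻¹' {n}).Finite) {s t : Set α}
    (hst : Disjoint s t) :
    countingSeries R size (s ∪ t) = countingSeries R size s + countingSeries R size t := by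
  ext n
  simp only [map_add, coeff_countingSeries]
  rw [Set.union_inter_distrib_right,
    Set.ncard_union_eq (hst.mono Set.inter_subset_left Set.inter_subset_left)
      ((hfin n).inter_of_right s) ((hfin n).inter_of_right t), Nat.cast_add]

lemma countingSeries_image {f : α → β} (hf : Injective f) (size : β → ℕ) (s : Set α) :
    countingSeries R size (f '' s) = countingSeries R (size ∘ f) s := by
  ext n
  rw [coeff_countingSeries, coeff_countingSeries, Set.preimage_comp, ← Set.image_inter_preimage,
    Set.ncard_image_of_injective _ hf]

lemma countingSeries_prod {sizeα : α → ℕ} {sizeβ : β → ℕ}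
    (hα : ∀ n, (sizeα ⁻¹' {n}).Finite) (hβ : ∀ n, (sizeβ ⁻¹' {n}).Finite)
    (s : Set α) (t : Set β) :
    countingSeries R (fun p : α × β => sizeα p.1 + sizeβ p.2) (s ×ˢ t) =
      countingSeries R sizeα s * countingSeries R sizeβ t := by
  ext n
  let block (k : ℕ × ℕ) : Set (α × β) := (s ∩ sizeα ⁻¹' {k.1}) ×ˢ (t ∩ sizeβ ⁻¹' {k.2})
  have hfiber : s ×ˢ t ∩ (fun p : α × β => sizeα p.1 + sizeβ p.2) ⁻¹' {n} =
      ⋃ k ∈ (↑(antidiagonal n) : Set (ℕ × ℕ)), block k := by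
    ext ⟨a, b⟩
    simp only [Set.mem_iUnion, SetLike.mem_coe, mem_antidiagonal, exists_prop]
    constructor
    · rintro ⟨⟨ha, hb⟩, hab⟩
      exact ⟨(sizeα a, sizeβ b), hab, ⟨ha, rfl⟩, hb, rfl⟩
    · rintro ⟨k, hk, ⟨ha, hak⟩, hb, hbk⟩
      exact ⟨⟨ha, hb⟩, (congrArg₂ (· + ·) hak hbk).trans hk⟩
  have hfinite (k : ℕ × ℕ) : (block k).Finite :=
    ((hα k.1).inter_of_right s).prod ((hβ k.2).inter_of_right t)
  have hdisjoint : (↑(antidiagonal n) : Set (ℕ × ℕ)).PairwiseDisjoint block := by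
    refine fun k _ l _ hkl => Set.disjoint_left.2 fun p hk hl => hkl (Prod.ext ?_ ?_)
    · exact hk.1.2.symm.trans hl.1.2
    · exact hk.2.2.symm.trans hl.2.2
  rw [coeff_mul, coeff_countingSeries, hfiber, Set.Finite.ncard_biUnion (Finset.finite_toSet _)
    (fun k _ => hfinite k) hdisjoint, finsum_mem_coe_finset, Nat.cast_sum]
  simp only [block, Set.ncard_prod, Nat.cast_mul, coeff_countingSeries]

lemma countingSeries_image2 {sizeα : α → ℕ} {sizeβ : β → ℕ} {sizeγ : γ → ℕ} {f : α → β → γ}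
    (hα : ∀ n, (sizeα ⁻¹' {n}).Finite) (hβ : ∀ n, (sizeβ ⁻¹' {n}).Finite)
    (hf : Injective2 f) (hsize : ∀ a b, sizeγ (f a b) = sizeα a + sizeβ b)
    (s : Set α) (t : Set β) :
    countingSeries R sizeγ (Set.image2 f s t) =
      countingSeries R sizeα s * countingSeries R sizeβ t := by
  have hcomp : sizeγ ∘ uncurry f = fun p => sizeα p.1 + sizeβ p.2 :=
    funext fun p => hsize p.1 p.2
  rw [← Set.image_uncurry_prod, countingSeries_image R hf.uncurry, hcomp,
    countingSeries_prod R hα hβ]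

end CountingSeries

section Raney

open PowerSeries

lemma raney_choose_recursion (r n k : ℕ) :
    ((r + 1) * (n + 1) + k + 1) * (k * ((r + 1) * (n + 1) + k).choose (n + 1) +
        (k + r + 1) * ((r + 1) * (n + 1) + k).choose n) =
      ((r + 1) * (n + 1) + k) * ((k + 1) * ((r + 1) * (n + 1) + k + 1).choose (n + 1)) := by
  obtain ⟨N, hN⟩ : ∃ N, N = (r + 1) * (n + 1) + k := ⟨_, rfl⟩
  have hsub : N - n = r * (n + 1) + k + 1 := by
    rw [hN, Nat.sub_eq_iff_eq_add (by nlinarith)]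
    ring
  have hright : N.choose (n + 1) * (n + 1) = N.choose n * (r * (n + 1) + k + 1) :=
    hsub ▸ Nat.choose_succ_right_eq N n
  have hdiag := Nat.add_one_mul_choose_eq N n
  rw [← hN]
  apply Nat.eq_of_mul_eq_mul_right n.succ_pos
  zify at hright hdiag hN ⊢
  linear_combination ((N : ℤ) + 1) * k * hright + N * (k + 1) * hdiag -
    (N + 1) * (k + 1) * (N.choose n : ℤ) * hN

variable {R : Type*} [CommRing R] [NoZeroDivisors R] [CharZero R]

theorem mul_coeff_pow_of_eq_one_add_X_mul_pow {r : ℕ} {B : R⟦X⟧} (hB : B = 1 + X * B ^ (r + 1))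
    (n k : ℕ) :
    (((r + 1) * n + k : ℕ) : R) * coeff n (B ^ k) = (k * ((r + 1) * n + k).choose n : ℕ) := by
  induction n generalizing k with
  | zero =>
    have hconst : constantCoeff B = 1 := by rw [hB]; simp
    simp [hconst]
  | succ n ihn =>
    induction k with
    | zero => simp [coeff_one]
    | succ k ihk =>
      have hpow : B ^ (k + 1) = B ^ k + X * B ^ (k + r + 1) := by
        calc B ^ (k + 1) = B ^ k * (1 + X * B ^ (r + 1)) := by rw [pow_succ, ← hB]
          _ = B ^ k + X * B ^ (k + r + 1) := by ring
      have hprev := ihn (k + r + 1)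
      have hrec := congrArg (Nat.cast : ℕ → R) (raney_choose_recursion r n k)
      rw [show (r + 1) * n + (k + r + 1) = (r + 1) * (n + 1) + k by ring] at hprev
      rw [hpow, map_add, coeff_succ_X_mul, ← add_assoc]
      have hN : (((r + 1) * (n + 1) + k : ℕ) : R) ≠ 0 := Nat.cast_ne_zero.2 (by positivity)
      apply mul_left_cancel₀ hN
      generalize (r + 1) * (n + 1) + k = N at *
      push_cast at ihk hprev hrec ⊢
      linear_combination ((N : R) + 1) * (ihk + hprev) + hrec

theorem add_one_mul_coeff_of_mul_one_sub_pow_eq_X {r : ℕ} {A : R⟦X⟧}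
    (hA : A * (1 - A) ^ (r + 1) = X) (hconst : constantCoeff A = 0) (n : ℕ) :
    ((n + 1 : ℕ) : R) * coeff (n + 1) A = ((r + 2) * n + r).choose n := by
  obtain ⟨B, hB⟩ : ∃ B, (1 - A) * B = 1 :=
    (isUnit_iff_constantCoeff.2 (by simp [hconst])).exists_right_inv
  have hAB : A = X * B ^ (r + 1) := by
    rw [← hA, mul_assoc, ← mul_pow, hB, one_pow, mul_one]
  have hBfix : B = 1 + X * B ^ (r + 1 + 1) := by
    rw [pow_succ, ← mul_assoc, ← hAB]
    linear_combination hB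
  have hcoeff := mul_coeff_pow_of_eq_one_add_X_mul_pow hBfix n (r + 1)
  have hchoose := Nat.choose_mul_succ_eq ((r + 2) * n + r) n
  have hsub : (r + 2) * n + r + 1 - n = (r + 1) * (n + 1) := by
    rw [Nat.sub_eq_iff_eq_add (by nlinarith)]
    ring
  rw [hsub] at hchoose
  rw [← coeff_succ_X_mul, ← hAB] at hcoeff
  have hM : (((r + 2) * n + r + 1 : ℕ) : R) ≠ 0 := Nat.cast_ne_zero.2 (by positivity)
  apply mul_left_cancel₀ hM
  have hcast := congrArg (Nat.cast : ℕ → R) hchoose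
  push_cast at hcoeff hcast ⊢
  linear_combination ((n : R) + 1) * hcoeff - hcast

end Raney

namespace LTree

open PowerSeries

lemma leaves_pos (t : LTree) : 0 < t.leaves := by
  induction t <;> grind [leaves]

lemma finite_setOf_leaves_le (n : ℕ) : {t : LTree | t.leaves ≤ n}.Finite := by
  induction n with
  | zero => exact Set.finite_empty.subset fun t ht => absurd ht t.leaves_pos.not_ge
  | succ n ih =>
    refine (((Set.finite_singleton leaf).union (ih.image2 x ih)).union (ih.image2 y ih)).subset ?_
    rintro (_ | ⟨u, v⟩ | ⟨u, v⟩) ht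
    · simp
    all_goals
      have hu := u.leaves_pos
      have hv := v.leaves_pos
      simp only [leaves, Set.mem_ofPred_eq] at ht
    · exact .inl (.inr ⟨u, by grind, v, by grind, rfl⟩)
    · exact .inr ⟨u, by grind, v, by grind, rfl⟩

lemma finite_leaves_preimage_singleton (n : ℕ) : (leaves ⁻¹' {n}).Finite :=
  (finite_setOf_leaves_le n).subset fun _ ht => ht.le

lemma avoidsFlex_leaf : AvoidsFlex leaf := by
  rintro _ ⟨⟩
  exact id

lemma avoidsFlex_x_iff {u v : LTree} : AvoidsFlex (x u v) ↔ AvoidsFlex u ∧ AvoidsFlex v := by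
  refine ⟨fun h => ⟨fun s hs => h s (.xl hs), fun s hs => h s (.xr hs)⟩, ?_⟩
  rintro ⟨hu, hv⟩ s (_ | hs | hs)
  · exact id
  · exact hu s hs
  · exact hv s hs

lemma avoidsFlex_y_iff {u v : LTree} :
    AvoidsFlex (y u v) ↔ AvoidsFlex u ∧ AvoidsFlex v ∧ ¬IsBadFlex (y u v) := by
  refine ⟨fun h => ⟨fun s hs => h s (.yl hs), fun s hs => h s (.yr hs), h _ (.refl _)⟩, ?_⟩
  rintro ⟨hu, hv, hroot⟩ s (_ | _ | _ | hs | hs)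
  · exact hroot
  · exact hu s hs
  · exact hv s hs

lemma forall_not_isBadFlex_y_iff (u : LTree) {v : LTree} :
    (∀ w, ¬IsBadFlex (y w v)) ↔ ¬IsBadFlex (y u v) := by
  have : Nonempty LTree := ⟨u⟩
  rcases v with _ | ⟨_, _ | _ | _⟩ | _ <;> simp [IsBadFlex]

/-- The set of avoiding trees, with generating function `A` in the header. -/
def avoiding : Set LTree := {t | AvoidsFlex t}

/-- The set of avoiding trees not rooted at `x`, with generating function `Z` in the header. -/
def avoidingNotX : Set LTree := {t | AvoidsFlex t ∧ ∀ u v, t ≠ x u v}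

/-- The set of avoiding trees that may be the right subtree of a `y` (whatever its left subtree),
with generating function `W` in the header. -/
def avoidingUnderY : Set LTree := {t | AvoidsFlex t ∧ ∀ u, ¬IsBadFlex (y u t)}

lemma avoiding_eq : avoiding = avoidingNotX ∪ Set.image2 x avoiding avoiding := by
  ext (_ | ⟨u, v⟩ | ⟨u, v⟩) <;> simp [avoiding, avoidingNotX, avoidsFlex_x_iff]

lemma avoidingNotX_eq : avoidingNotX = {leaf} ∪ Set.image2 y avoiding avoidingUnderY := by
  ext (_ | ⟨u, v⟩ | ⟨u, v⟩)
  · simp [avoidingNotX, avoidsFlex_leaf]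
  · simp [avoidingNotX]
  · simp [avoiding, avoidingNotX, avoidingUnderY, avoidsFlex_y_iff,
      forall_not_isBadFlex_y_iff u]

lemma avoidingUnderY_eq : avoidingUnderY = {leaf} ∪ Set.image2 x avoiding avoidingNotX := by
  have : Nonempty LTree := ⟨leaf⟩
  ext (_ | ⟨u, _ | _ | _⟩ | ⟨u, v⟩) <;>
    simp [avoiding, avoidingUnderY, avoidingNotX, avoidsFlex_leaf, avoidsFlex_x_iff, IsBadFlex]

section Semiring

variable (R : Type*) [Semiring R]

lemma countingSeries_leaf : countingSeries R leaves {leaf} = X :=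
  (countingSeries_singleton R leaves leaf).trans (pow_one X)

lemma countingSeries_image2_x (s t : Set LTree) :
    countingSeries R leaves (Set.image2 x s t) =
      countingSeries R leaves s * countingSeries R leaves t :=
  countingSeries_image2 R finite_leaves_preimage_singleton finite_leaves_preimage_singleton
    (fun _ _ _ _ h => x.inj h) (fun _ _ => rfl) s t

lemma countingSeries_image2_y (s t : Set LTree) :
    countingSeries R leaves (Set.image2 y s t) =
      countingSeries R leaves s * countingSeries R leaves t :=
  countingSeries_image2 R finite_leaves_preimage_singleton finite_leaves_preimage_singleton
    (fun _ _ _ _ h => y.inj h) (fun _ _ => rfl) s t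

lemma countingSeries_avoiding :
    countingSeries R leaves avoiding =
      countingSeries R leaves avoidingNotX + countingSeries R leaves avoiding ^ 2 := by
  have hdisj : Disjoint avoidingNotX (Set.image2 x avoiding avoiding) := by
    rw [Set.disjoint_right]
    rintro _ ⟨u, _, v, _, rfl⟩ h
    exact h.2 u v rfl
  conv_lhs => rw [avoiding_eq]
  rw [countingSeries_union R finite_leaves_preimage_singleton hdisj, countingSeries_image2_x, sq]

lemma countingSeries_avoidingNotX :
    countingSeries R leaves avoidingNotX =
      X + countingSeries R leaves avoiding * countingSeries R leaves avoidingUnderY := by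
  have hdisj : Disjoint {leaf} (Set.image2 y avoiding avoidingUnderY) := by simp
  rw [avoidingNotX_eq, countingSeries_union R finite_leaves_preimage_singleton hdisj,
    countingSeries_leaf, countingSeries_image2_y]

lemma countingSeries_avoidingUnderY :
    countingSeries R leaves avoidingUnderY =
      X + countingSeries R leaves avoiding * countingSeries R leaves avoidingNotX := by
  have hdisj : Disjoint {leaf} (Set.image2 x avoiding avoidingNotX) := by simp
  rw [avoidingUnderY_eq, countingSeries_union R finite_leaves_preimage_singleton hdisj,
    countingSeries_leaf, countingSeries_image2_x]

end Semiring

section CommRing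

variable (R : Type*) [CommRing R]

lemma countingSeries_avoidingNotX_eq_avoidingUnderY :
    countingSeries R leaves avoidingNotX = countingSeries R leaves avoidingUnderY := by
  have hunit : IsUnit (1 + countingSeries R leaves avoiding) :=
    isUnit_iff_constantCoeff.2 (by simp [constantCoeff_countingSeries R leaves_pos])
  rw [← sub_eq_zero, ← hunit.mul_right_eq_zero]
  linear_combination countingSeries_avoidingNotX R - countingSeries_avoidingUnderY R

theorem countingSeries_avoiding_mul_one_sub_sq :
    countingSeries R leaves avoiding * (1 - countingSeries R leaves avoiding) ^ 2 = X := by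
  have hZ := countingSeries_avoidingNotX R
  rw [← countingSeries_avoidingNotX_eq_avoidingUnderY] at hZ
  linear_combination
    (1 - countingSeries R leaves avoiding) * countingSeries_avoiding R + hZ

end CommRing

theorem add_one_mul_ncard_avoiding (m : ℕ) :
    (m + 1) * (avoiding ∩ leaves ⁻¹' {m + 1}).ncard = (3 * m + 1).choose m := by
  have h := add_one_mul_coeff_of_mul_one_sub_pow_eq_X (countingSeries_avoiding_mul_one_sub_sq ℤ)
    (constantCoeff_countingSeries ℤ leaves_pos avoiding) m
  rw [coeff_countingSeries] at h
  exact_mod_cast h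

end LTree

open LTree in
/-- For every `n ≥ 1`, the number of labeled planar binary trees with `n` leaves
avoiding the two patterns `y(*, y(*,*))` and `y(*, x(*, x(*,*)))`
(i.e. `dim (noncom-Flex)(n)`) equals `(3n-2)! / (n! (2n-1)!) = (1/n)·C(3n-2, n-1)`;
in particular `n` divides `C(3n-2, n-1)`. -/
theorem noncomFlex_dim :
    ∀ n : ℕ, 1 ≤ n →
      n ∣ (3 * n - 2).choose (n - 1) ∧
      Nat.card {t : LTree // t.leaves = n ∧ AvoidsFlex t} =
        (3 * n - 2).choose (n - 1) / n := by
  intro n hn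
  obtain ⟨m, rfl⟩ := Nat.exists_eq_add_of_le' hn
  have hcard : Nat.card {t : LTree // t.leaves = m + 1 ∧ AvoidsFlex t} =
      (avoiding ∩ leaves ⁻¹' {m + 1}).ncard := by
    rw [Set.inter_comm]
    rfl
  rw [hcard, show 3 * (m + 1) - 2 = 3 * m + 1 by lia, Nat.add_sub_cancel,
    ← add_one_mul_ncard_avoiding]
  exact ⟨dvd_mul_right _ _, (Nat.mul_div_cancel_left _ m.succ_pos).symm⟩
end
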